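/- arXiv:1606.01013 — 2 statements merged into one kernel-verified Lean document; each statement's English description precedes it below -/
import Mathlib

section
/- If X is a Čech-complete Tychonoff space and C_p(X) is an Ascoli space, then X is scattered. -/
open Topology Filter

abbrev Cp (X : Type*) [TopologicalSpace X] : Type _ := {f : X → ℝ // Continuous f}

def IsAscoli (Y : Type*) [TopologicalSpace Y] : Prop :=
  ∀ K : Set C(Y, ℝ), IsCompact K → Continuous fun p : Y × K => (p.2 : C(Y, ℝ)) p.1

def CechComplete (X : Type u) [TopologicalSpace X] : Prop :=
  ∃ (Y : Type u) (_ : TopologicalSpace Y) (_ : CompactSpace Y) (_ : T2Space Y)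
    (e : X → Y), IsEmbedding e ∧ Dense (Set.range e) ∧ IsGδ (Set.range e)

def IsScattered (X : Type*) [TopologicalSpace X] : Prop :=
  ∀ A : Set X, A.Nonempty → ∃ a ∈ A, ∃ U : Set X, IsOpen U ∧ U ∩ A = {a}

/-!
Suppose `X` is Čech-complete and not scattered. A dense-in-itself subset of `X` supports a Cantor
scheme whose closed sets are taken in a compactification and avoid, level by level, the complement
of `X`; hence some compact `K ⊆ X` maps continuously onto the Cantor space.

Restrict that map to a compact set `E ⊆ K` on which it is irreducible. The preimages in `E` of basic
open sets are then countably many infinite sets `B k` such that every nonempty open subset of `E`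
contains one of them. Choose finite sets `P m` containing more than `m` points of each `B k`,
`k ≤ m`. By Baire's theorem a compact `H ⊆ C_p(X)` is uniformly bounded above on some `B k`, so for
large `m` every `h ∈ H` satisfies `h ≤ m` at more than `m` points of `P m`. On the other hand, every
neighbourhood of `0` in `C_p(X)` contains, for all large `m`, functions that satisfy `h ≤ m` at no
more than `m` points of `P m`. A function of `h` measuring this difference gives a null sequence in
`C_k(C_p(X))` that does not converge continuously at `0`, so `C_p(X)` is not Ascoli.
-/

section CantorScheme

open PiNat CantorScheme

variable {Y β : Type*} {C : List β → Set Y}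

/-- The graph of the correspondence between points and branches of a scheme `C`: it relates `y` to
the branch `x` if `y` lies in all the sets of `C` along `x`. For a disjoint scheme it is the graph
of a map from a subset of `Y` to the space of branches. -/
def schemeGraph (C : List β → Set Y) : Set (Y × (ℕ → β)) :=
  {p | ∀ n, p.1 ∈ C (res p.2 n)}

lemma isClosed_schemeGraph [TopologicalSpace Y] [TopologicalSpace β] [DiscreteTopology β]
    (hC : ∀ s, IsClosed (C s)) : IsClosed (schemeGraph C) := by
  simp only [schemeGraph, Set.ofPred_forall]
  refine isClosed_iInter fun n => isOpen_compl_iff.1 (isOpen_iff_mem_nhds.2 fun p hp => ?_)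
  have hcyl : cylinder p.2 n ∈ 𝓝 p.2 :=
    (isOpen_cylinder (fun _ => β) p.2 n).mem_nhds (self_mem_cylinder p.2 n)
  filter_upwards [prod_mem_nhds ((hC (res p.2 n)).isOpen_compl.mem_nhds hp) hcyl] with q hq
  have hres : res q.2 n = res p.2 n := by
    simpa only [cylinder_eq_res, Set.mem_ofPred_eq] using hq.2
  change q.1 ∉ C (res q.2 n)
  rw [hres]
  exact hq.1

lemma injOn_fst_schemeGraph (hC : CantorScheme.Disjoint C) :
    Set.InjOn Prod.fst (schemeGraph C) := by
  rintro ⟨y, x⟩ hx ⟨_, x'⟩ hx' rfl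
  suffices ∀ n, res x n = res x' n by rw [res_injective (funext this)]
  intro n
  induction n with
  | zero => rfl
  | succ n ih =>
    have hy : y ∈ C (x n :: res x n) := hx (n + 1)
    have hy' : y ∈ C (x' n :: res x n) := ih ▸ hx' (n + 1)
    have hn : x n = x' n := by
      by_contra hne
      exact Set.disjoint_left.1 (hC _ hne) hy hy'
    rw [res_succ, res_succ, hn, ih]

lemma surjOn_snd_schemeGraph [TopologicalSpace Y] [CompactSpace Y] (hC : ∀ s, IsClosed (C s))
    (hne : ∀ s, (C s).Nonempty) (hanti : CantorScheme.Antitone C) :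
    Set.SurjOn Prod.snd (schemeGraph C) Set.univ := by
  intro x _
  obtain ⟨y, hy⟩ := IsCompact.nonempty_iInter_of_sequence_nonempty_isCompact_isClosed
    (fun n => C (res x n)) (fun n => hanti _ _) (fun n => hne _) (hC _).isCompact fun n => hC _
  exact ⟨(y, x), Set.mem_iInter.1 hy, rfl⟩

lemma exists_preperfect_subset_closure_subset [TopologicalSpace Y] [RegularSpace Y] {D W : Set Y}
    {y : Y} (hD : Preperfect D) (hy : y ∈ D) (hW : W ∈ 𝓝 y) :
    ∃ D' ⊆ D, Preperfect D' ∧ D'.Nonempty ∧ closure D' ⊆ W := by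
  obtain ⟨U, hU, hyU, hUW⟩ :=
    TopologicalSpace.isTopologicalBasis_opens.exists_closure_subset hW
  exact ⟨U ∩ D, Set.inter_subset_right, hD.open_inter hU, ⟨y, hyU, hy⟩,
    (closure_mono Set.inter_subset_left).trans hUW⟩

lemma exists_preperfect_pair_disjoint_closure [TopologicalSpace Y] [T3Space Y] {D G : Set Y}
    (hD : Preperfect D) (hne : D.Nonempty) (hG : IsOpen G) (hDG : D ⊆ G) :
    ∃ D' : Bool → Set Y, (∀ b, D' b ⊆ D ∧ Preperfect (D' b) ∧ (D' b).Nonempty) ∧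
      (∀ b, closure (D' b) ⊆ G) ∧ Disjoint (closure (D' true)) (closure (D' false)) := by
  obtain ⟨a, ha⟩ := hne
  obtain ⟨b, ⟨-, hb⟩, hba⟩ := preperfect_iff_nhds.1 hD a ha Set.univ univ_mem
  obtain ⟨U, V, hU, hV, haU, hbV, hUV⟩ := t2_separation hba.symm
  obtain ⟨A, hAD, hA, hAne, hAU⟩ := exists_preperfect_subset_closure_subset hD ha
    ((hU.inter hG).mem_nhds ⟨haU, hDG ha⟩)
  obtain ⟨B, hBD, hB, hBne, hBV⟩ := exists_preperfect_subset_closure_subset hD hb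
    ((hV.inter hG).mem_nhds ⟨hbV, hDG hb⟩)
  rw [Set.subset_inter_iff] at hAU hBV
  exact ⟨fun i => cond i A B, Bool.forall_bool.2 ⟨⟨hBD, hB, hBne⟩, hAD, hA, hAne⟩,
    Bool.forall_bool.2 ⟨hBV.2, hAU.2⟩, hUV.mono hAU.1 hBV.1⟩

lemma exists_cantorScheme_of_preperfect [TopologicalSpace Y] [T3Space Y] {A : Set Y}
    (hA : Preperfect A) (hne : A.Nonempty) {G : ℕ → Set Y} (hG : ∀ n, IsOpen (G n))
    (hAG : ∀ n, A ⊆ G n) :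
    ∃ C : List Bool → Set Y, (∀ s, IsClosed (C s)) ∧ (∀ s, (C s).Nonempty) ∧
      CantorScheme.Antitone C ∧ CantorScheme.Disjoint C ∧ ∀ s b, C (b :: s) ⊆ G s.length := by
  let Node := {D : Set Y // D ⊆ A ∧ Preperfect D ∧ D.Nonempty}
  have split (n : ℕ) (D : Node) : ∃ D' : Bool → Node, (∀ b, (D' b).1 ⊆ D.1) ∧
      (∀ b, closure (D' b).1 ⊆ G n) ∧ Disjoint (closure (D' true).1) (closure (D' false).1) := by
    obtain ⟨D', hD', hG', hdisj⟩ := exists_preperfect_pair_disjoint_closure D.2.2.1 D.2.2.2 (hG n)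
      (D.2.1.trans (hAG n))
    exact ⟨fun b => ⟨D' b, (hD' b).1.trans D.2.1, (hD' b).2⟩, fun b => (hD' b).1, hG', hdisj⟩
  choose child hsub hclosure hdisj using split
  let D : List Bool → Node := List.rec ⟨A, subset_rfl, hA, hne⟩ fun b s E => child s.length E b
  refine ⟨fun s => closure (D s).1, fun s => isClosed_closure, fun s => (D s).2.2.2.closure,
    fun s b => closure_mono (hsub s.length (D s) b), fun s => ?_,
    fun s b => hclosure s.length (D s) b⟩
  rintro (_ | _) (_ | _) hne
  exacts [absurd rfl hne, (hdisj s.length (D s)).symm, hdisj s.length (D s), absurd rfl hne]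

end CantorScheme

section CechComplete

variable {X : Type u} [TopologicalSpace X]

lemma exists_preperfect_of_not_isScattered (hX : ¬IsScattered X) :
    ∃ A : Set X, A.Nonempty ∧ Preperfect A := by
  simp only [IsScattered, not_forall, not_exists, not_and] at hX
  obtain ⟨A, hne, hA⟩ := hX
  refine ⟨A, hne, preperfect_iff_nhds.2 fun a ha U hU => ?_⟩
  obtain ⟨V, hVU, hV, haV⟩ := mem_nhds_iff.1 hU
  by_contra! h
  exact hA a ha V hV (Set.eq_singleton_iff_unique_mem.2
    ⟨⟨haV, ha⟩, fun b hb => h b ⟨hVU hb.1, hb.2⟩⟩)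

theorem CechComplete.exists_isCompact_surjective_cantor (hcc : CechComplete X)
    (hX : ¬IsScattered X) :
    ∃ (K : Set X) (π : K → ℕ → Bool), IsCompact K ∧ Continuous π ∧ Function.Surjective π := by
  obtain ⟨Y, _, _, _, e, he, -, hGδ⟩ := hcc
  obtain ⟨G, hG, hGe⟩ := isGδ_iff_eq_iInter_nat.1 hGδ
  obtain ⟨A, hne, hA⟩ := exists_preperfect_of_not_isScattered hX
  have heA : Preperfect (e '' A) :=
    (Set.image_mono hA).trans (he.continuous.image_derivedSet he.injective)
  obtain ⟨C, hC, hCne, hanti, hdisj, hCG⟩ := exists_cantorScheme_of_preperfect heA (hne.image e)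
    hG fun n => (Set.image_subset_range e A).trans (hGe.trans_subset (Set.iInter_subset G n))
  have : CompactSpace (schemeGraph C) :=
    isCompact_iff_compactSpace.1 (isClosed_schemeGraph hC).isCompact
  have hlift (z : schemeGraph C) : ∃ x, e x = z.1.1 := by
    rw [← Set.mem_range, hGe, Set.mem_iInter]
    intro n
    simpa only [PiNat.res_length] using hCG _ _ (z.2 (n + 1))
  choose g hg using hlift
  have heg : e ∘ g = Prod.fst ∘ Subtype.val := funext hg
  have hgc : Continuous g := by
    rw [he.isInducing.continuous_iff, heg]
    exact continuous_fst.comp continuous_subtype_val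
  have hgi : Function.Injective g := by
    refine .of_comp (f := e) ?_
    rw [heg]
    exact (injOn_fst_schemeGraph hdisj).injective
  have := he.t2Space
  let φ : schemeGraph C ≃ₜ Set.range g := (hgc.isClosedEmbedding hgi).toHomeomorph
  refine ⟨Set.range g, fun x => (φ.symm x).1.2, isCompact_range hgc, by fun_prop, fun x => ?_⟩
  obtain ⟨p, hp, rfl⟩ := surjOn_snd_schemeGraph hC hCne hanti (Set.mem_univ x)
  exact ⟨φ ⟨p, hp⟩, by simp⟩

end CechComplete

section Irreducible

universe u v

/-- A surjection is *irreducible* if it maps no proper closed subset of its domain onto its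
codomain. Continuity is not part of the definition. -/
structure IsIrreducibleMap {E A : Type*} [TopologicalSpace E] (ρ : E → A) : Prop where
  surjective : Function.Surjective ρ
  image_ne_univ : ∀ F : Set E, F ≠ Set.univ → IsClosed F → ρ '' F ≠ Set.univ

lemma IsIrreducibleMap.exists_isOpen_preimage_subset {E A : Type*} [TopologicalSpace E]
    [TopologicalSpace A] {ρ : E → A} (hirr : IsIrreducibleMap ρ) (hρ : IsClosedMap ρ) {W : Set E}
    (hW : IsOpen W) (hne : W.Nonempty) :
    ∃ V : Set A, IsOpen V ∧ V.Nonempty ∧ ρ ⁻¹' V ⊆ W := by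
  refine ⟨Set.kernImage ρ W, isClosedMap_iff_kernImage.1 hρ hW, ?_,
    Set.subset_kernImage_iff.1 subset_rfl⟩
  rw [Set.kernImage_eq_compl, Set.nonempty_compl]
  exact hirr.image_ne_univ Wᶜ (Set.compl_ne_univ.2 hne) hW.isClosed_compl

lemma exists_isIrreducibleMap_domRestrict {D : Type max u v} {A : Type v} [TopologicalSpace D]
    [CompactSpace D] [TopologicalSpace A] [T1Space A] {π : D → A} (hπ : Continuous π)
    (hsurj : Function.Surjective π) :
    ∃ E : Set D, CompactSpace E ∧ IsIrreducibleMap (E.domRestrict π) := by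
  obtain ⟨E, hE, hEsurj, hirr⟩ := exists_compact_surjective_zorn_subset
    (A := ULift.{u} A) (continuous_uliftUp.comp hπ) (ULift.up_surjective.comp hsurj)
  refine ⟨E, hE, fun a => ?_, fun F hF hFc hFsurj => hirr F hF hFc ?_⟩
  · obtain ⟨d, hd, hda⟩ := hEsurj.ge (Set.mem_univ (ULift.up a))
    exact ⟨⟨d, hd⟩, ULift.up_injective hda⟩
  · change (ULift.up ∘ E.domRestrict π) '' F = Set.univ
    rw [Set.image_comp, hFsurj, Set.image_univ, ULift.up_surjective.range_eq]

lemma perfectSpace_pi {ι : Type*} [Infinite ι] {α : ι → Type*} [∀ i, TopologicalSpace (α i)]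
    [∀ i, Nontrivial (α i)] : PerfectSpace (∀ i, α i) := by
  classical
  refine ⟨preperfect_iff_nhds.2 fun x _ U hU => ?_⟩
  rw [nhds_pi, Filter.mem_pi] at hU
  obtain ⟨J, hJ, t, ht, hJU⟩ := hU
  obtain ⟨i, hi⟩ := hJ.exists_notMem
  obtain ⟨v, hv⟩ := exists_ne (x i)
  refine ⟨Function.update x i v, ⟨hJU fun j hj => ?_, Set.mem_univ _⟩, fun h => hv ?_⟩
  · rw [Function.update_of_ne (ne_of_mem_of_not_mem hj hi)]
    exact mem_of_mem_nhds (ht j)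
  · rw [← h, Function.update_self]

lemma IsIrreducibleMap.exists_infinite_piNetwork {E A : Type*} [TopologicalSpace E]
    [TopologicalSpace A] [SecondCountableTopology A] [PerfectSpace A] [T1Space A] [Nonempty A]
    {ρ : E → A} (hirr : IsIrreducibleMap ρ) (hρ : IsClosedMap ρ) :
    ∃ B : ℕ → Set E, (∀ k, (B k).Infinite) ∧
      ∀ W : Set E, IsOpen W → W.Nonempty → ∃ k, B k ⊆ W := by
  obtain ⟨b, hbc, hb0, hb⟩ := TopologicalSpace.exists_countable_basis A
  have hbne : b.Nonempty :=
    Set.nonempty_iff_ne_empty.2 fun h => Set.empty_ne_univ (by simpa [h] using hb.sUnion_eq)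
  obtain ⟨U, rfl⟩ := hbc.exists_eq_range hbne
  refine ⟨fun k => ρ ⁻¹' U k, fun k => ?_, fun W hW hne => ?_⟩
  · have hUne : (U k).Nonempty := Set.nonempty_iff_ne_empty.2 fun h => hb0 ⟨k, h⟩
    obtain ⟨a, ha⟩ := hUne
    have hUinf : (U k).Infinite := infinite_of_mem_nhds a ((hb.isOpen ⟨k, rfl⟩).mem_nhds ha)
    exact hUinf.preimage (hirr.surjective.range_eq ▸ Set.subset_univ _)
  · obtain ⟨V, hV, ⟨a, ha⟩, hVW⟩ := hirr.exists_isOpen_preimage_subset hρ hW hne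
    obtain ⟨_, ⟨k, rfl⟩, -, hkV⟩ := hb.exists_subset_of_mem_open ha hV
    exact ⟨k, (Set.preimage_mono hkV).trans hVW⟩

end Irreducible

lemma IsAscoli.tendsto_eval {Y : Type*} [TopologicalSpace Y] (hY : IsAscoli Y) {f : ℕ → C(Y, ℝ)}
    {f₀ : C(Y, ℝ)} (hf : Tendsto f atTop (𝓝 f₀)) (y : Y) :
    Tendsto (fun p : Y × ℕ => f p.2 p.1) (𝓝 y ×ˢ atTop) (𝓝 (f₀ y)) := by
  let K : Set C(Y, ℝ) := insert f₀ (Set.range f)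
  let fK (n : ℕ) : K := ⟨f n, Set.mem_insert_of_mem _ ⟨n, rfl⟩⟩
  have hfK : Tendsto fK atTop (𝓝 ⟨f₀, Set.mem_insert _ _⟩) := tendsto_subtype_rng.2 hf
  have heval := (hY K hf.isCompact_insert_range).tendsto (y, ⟨f₀, Set.mem_insert _ _⟩)
  rw [nhds_prod_eq] at heval
  exact heval.comp (tendsto_id.prodMap hfK)

lemma exists_isOpen_forall_le_of_bddAbove {Z ι : Type*} [TopologicalSpace Z] [BaireSpace Z]
    [Nonempty Z] {f : ι → Z → ℝ} (hf : ∀ i, LowerSemicontinuous (f i))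
    (hbdd : ∀ z, BddAbove (Set.range fun i => f i z)) :
    ∃ (k : ℕ) (W : Set Z), IsOpen W ∧ W.Nonempty ∧ ∀ z ∈ W, ∀ i, f i z ≤ k := by
  obtain ⟨k, hk⟩ := nonempty_interior_of_iUnion_of_closed
    (f := fun k : ℕ => ⋂ i, f i ⁻¹' Set.Iic (k : ℝ))
    (fun k => isClosed_iInter fun i => (hf i).isClosed_preimage k) <| by
      refine Set.eq_univ_of_forall fun z => ?_
      obtain ⟨c, hc⟩ := hbdd z
      obtain ⟨k, hk⟩ := exists_nat_ge c
      exact Set.mem_iUnion.2 ⟨k, Set.mem_iInter.2 fun i => (hc ⟨i, rfl⟩).trans hk⟩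
  exact ⟨k, _, isOpen_interior, hk, fun z hz i => Set.mem_iInter.1 (interior_subset hz) i⟩

lemma exists_finset_eventually_card_gt {X : Type*} {B : ℕ → Set X} (hB : ∀ k, (B k).Infinite) :
    ∃ P : ℕ → Finset X, ∀ k, ∀ᶠ m in atTop, ∃ T ⊆ P m, ↑T ⊆ B k ∧ m < T.card := by
  classical
  choose T hTB hT using fun k m => (hB k).exists_subset_card_eq (m + 1)
  refine ⟨fun m => (Finset.range (m + 1)).biUnion (T · m), fun k => ?_⟩
  filter_upwards [eventually_ge_atTop k] with m hm
  exact ⟨T k m, Finset.subset_biUnion_of_mem (T · m) (Finset.mem_range_succ_iff.2 hm), hTB k m,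
    (hT k m).symm ▸ m.lt_succ_self⟩

namespace Cp

variable {X : Type*} [TopologicalSpace X]

lemma continuous_eval (x : X) : Continuous fun h : Cp X => h.1 x :=
  (continuous_apply x).comp continuous_subtype_val

lemma exists_finset_of_mem_nhds {h₀ : Cp X} {s : Set (Cp X)} (hs : s ∈ 𝓝 h₀) :
    ∃ F : Finset X, ∀ h : Cp X, (∀ x ∈ F, h.1 x = h₀.1 x) → h ∈ s := by
  rw [nhds_subtype_eq_comap, mem_comap] at hs
  obtain ⟨u, hu, hus⟩ := hs
  rw [nhds_pi, Filter.mem_pi] at hu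
  obtain ⟨J, hJ, t, ht, hJu⟩ := hu
  refine ⟨hJ.toFinset, fun h hh => hus (hJu fun x hx => ?_)⟩
  rw [hh x (hJ.mem_toFinset.2 hx)]
  exact mem_of_mem_nhds (ht x)

lemma exists_eqOn_finset [T35Space X] (F : Finset X) (v : X → ℝ) :
    ∃ h : Cp X, Set.EqOn h.1 v F := by
  classical
  induction F using Finset.induction with
  | empty => exact ⟨⟨0, continuous_zero⟩, by simp⟩
  | insert a F ha ih =>
    obtain ⟨h, hh⟩ := ih
    obtain ⟨f, hf, hfa, hfF⟩ := CompletelyRegularSpace.completely_regular a (F : Set X)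
      F.finite_toSet.isClosed (by simpa using ha)
    have hcorr : Continuous fun x => h.1 x + (v a - h.1 a) * (1 - f x) := by
      have := h.2
      fun_prop
    refine ⟨⟨_, hcorr⟩, (Finset.forall_mem_insert ..).2 ⟨?_, fun x hx => ?_⟩⟩
    · simp [hfa]
    · simp [hfF hx, hh hx]

/-- A continuous substitute for the deficit `m + 1 - #{x ∈ P | h x ≤ m}`, truncated below at `0`:
the points of `P` are counted with a weight that falls from `1` to `0` as `h x` grows from `m` to
`m + 1`. These are the functions on `C_p(X)` that witness the failure of the Ascoli property. -/
noncomputable def deficit (P : Finset X) (m : ℕ) : C(Cp X, ℝ) where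
  toFun h := max 0 (m + 1 - ∑ x ∈ P, max 0 (min 1 (m + 1 - h.1 x)))
  continuous_toFun := by
    have hmin (x : X) : Continuous fun h : Cp X => min 1 (m + 1 - h.1 x) :=
      continuous_const.min (continuous_const.sub (continuous_eval x))
    fun_prop

lemma deficit_eq_zero {P T : Finset X} {m : ℕ} {h : Cp X} (hTP : T ⊆ P) (hT : m < T.card)
    (hle : ∀ x ∈ T, h.1 x ≤ m) : deficit P m h = 0 := by
  have hcount : (m + 1 : ℝ) ≤ ∑ x ∈ P, max 0 (min 1 (m + 1 - h.1 x)) := calc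
    (m + 1 : ℝ) ≤ T.card := by exact_mod_cast hT
    _ = ∑ _ ∈ T, (1 : ℝ) := by simp
    _ ≤ ∑ x ∈ T, max 0 (min 1 (m + 1 - h.1 x)) := Finset.sum_le_sum fun x hx =>
        le_max_of_le_right (le_min le_rfl (by linarith [hle x hx]))
    _ ≤ ∑ x ∈ P, max 0 (min 1 (m + 1 - h.1 x)) :=
        Finset.sum_le_sum_of_subset_of_nonneg hTP fun _ _ _ => le_max_left _ _
  exact max_eq_left (sub_nonpos.2 hcount)

lemma one_le_deficit {P F : Finset X} {m : ℕ} {h : Cp X} (hF : F.card ≤ m)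
    (hle : ∀ x ∈ P, x ∉ F → m + 1 ≤ h.1 x) : 1 ≤ deficit P m h := by
  classical
  have hcount : ∑ x ∈ P, max 0 (min 1 (m + 1 - h.1 x)) ≤ (m : ℝ) := calc
    ∑ x ∈ P, max 0 (min 1 (m + 1 - h.1 x)) ≤ ∑ x ∈ P, if x ∈ F then (1 : ℝ) else 0 := by
      refine Finset.sum_le_sum fun x hx => ?_
      split_ifs with hxF
      · exact max_le zero_le_one (min_le_left _ _)
      · exact max_le le_rfl (min_le_of_right_le (sub_nonpos.2 (hle x hx hxF)))
    _ = (P ∩ F).card := by simp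
    _ ≤ m := by exact_mod_cast (Finset.card_le_card Finset.inter_subset_right).trans hF
  exact le_max_of_le_right (by linarith)

lemma tendsto_deficit {Z : Type*} [TopologicalSpace Z] [BaireSpace Z] [Nonempty Z] {g : Z → X}
    (hg : Continuous g) {B : ℕ → Set X}
    (hB : ∀ W : Set Z, IsOpen W → W.Nonempty → ∃ k, B k ⊆ g '' W) {P : ℕ → Finset X}
    (hP : ∀ k, ∀ᶠ m in atTop, ∃ T ⊆ P m, ↑T ⊆ B k ∧ m < T.card) :
    Tendsto (fun m => deficit (P m) m) atTop (𝓝 0) := by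
  rw [ContinuousMap.tendsto_iff_forall_isCompact_tendstoUniformlyOn]
  intro H hH
  obtain ⟨c, W, hW, hne, hWc⟩ := exists_isOpen_forall_le_of_bddAbove
    (f := fun (h : H) z => h.1.1 (g z)) (fun h => (h.1.2.comp hg).lowerSemicontinuous) fun z => by
      simpa only [Set.image_eq_range] using (hH.image (continuous_eval (g z))).bddAbove
  obtain ⟨k, hkW⟩ := hB W hW hne
  rw [Metric.tendstoUniformlyOn_iff]
  intro ε hε
  filter_upwards [hP k, eventually_ge_atTop c] with m ⟨T, hTP, hTB, hT⟩ hcm h hh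
  have hle : ∀ x ∈ T, h.1 x ≤ m := by
    intro x hx
    obtain ⟨z, hz, rfl⟩ := hkW (hTB hx)
    exact (hWc z hz ⟨h, hh⟩).trans (by exact_mod_cast hcm)
  simpa [deficit_eq_zero hTP hT hle] using hε

lemma not_tendsto_deficit [T35Space X] (hX : IsAscoli (Cp X)) (P : ℕ → Finset X) :
    ¬Tendsto (fun m => deficit (P m) m) atTop (𝓝 0) := by
  classical
  intro hlim
  let h₀ : Cp X := ⟨0, continuous_zero⟩
  have hsmall : ∀ᶠ p : Cp X × ℕ in 𝓝 h₀ ×ˢ atTop, deficit (P p.2) p.2 p.1 < 1 :=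
    (hX.tendsto_eval hlim h₀).eventually (gt_mem_nhds one_pos)
  obtain ⟨s, hs, t, ht, hst⟩ := eventually_prod_iff.1 hsmall
  obtain ⟨F, hF⟩ := exists_finset_of_mem_nhds hs
  obtain ⟨m, hmt, hFm⟩ := (ht.and (eventually_ge_atTop F.card)).exists
  obtain ⟨h, hh⟩ := exists_eqOn_finset (F ∪ P m) fun x => if x ∈ F then 0 else (m + 1 : ℝ)
  have hhF : ∀ x ∈ F, h.1 x = 0 := fun x hx =>
    (hh (Finset.mem_union_left _ hx)).trans (if_pos hx)
  have hhP : ∀ x ∈ P m, x ∉ F → m + 1 ≤ h.1 x := fun x hx hxF =>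
    ((hh (Finset.mem_union_right _ hx)).trans (if_neg hxF)).ge
  exact (hst (hF h hhF) hmt).not_ge (one_le_deficit hFm hhP)

end Cp

section NonAscoli

universe u v

theorem not_isAscoli_Cp_of_piNetwork {X Z : Type*} [TopologicalSpace X] [T35Space X]
    [TopologicalSpace Z] [BaireSpace Z] [Nonempty Z] {g : Z → X} (hg : Continuous g)
    {B : ℕ → Set X} (hinf : ∀ k, (B k).Infinite)
    (hB : ∀ W : Set Z, IsOpen W → W.Nonempty → ∃ k, B k ⊆ g '' W) : ¬IsAscoli (Cp X) := by
  obtain ⟨P, hP⟩ := exists_finset_eventually_card_gt hinf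
  exact fun hX => Cp.not_tendsto_deficit hX P (Cp.tendsto_deficit hg hB hP)

theorem not_isAscoli_Cp_of_surjective {X : Type max u v} {A : Type v} [TopologicalSpace X]
    [T35Space X] [TopologicalSpace A] [SecondCountableTopology A] [PerfectSpace A] [T2Space A]
    [Nonempty A] {K : Set X} (hK : IsCompact K) {π : K → A} (hπ : Continuous π)
    (hsurj : Function.Surjective π) : ¬IsAscoli (Cp X) := by
  have : CompactSpace K := isCompact_iff_compactSpace.1 hK
  obtain ⟨E, _, hirr⟩ := exists_isIrreducibleMap_domRestrict.{u, v} hπ hsurj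
  have hclosed : IsClosedMap (E.domRestrict π) := (hπ.comp continuous_subtype_val).isClosedMap
  obtain ⟨B, hinf, hB⟩ := hirr.exists_infinite_piNetwork hclosed
  have : Nonempty E := hirr.surjective.nonempty
  let g : E → X := fun z => z.1.1
  have hgi : Function.Injective g := Subtype.val_injective.comp Subtype.val_injective
  refine not_isAscoli_Cp_of_piNetwork (g := g) (by fun_prop) (B := fun k => g '' B k)
    (fun k => (hinf k).image hgi.injOn) fun W hW hne => ?_
  exact (hB W hW hne).imp fun k hk => Set.image_mono hk

end NonAscoli

theorem stmt11 {X : Type u} [TopologicalSpace X] [T35Space X]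
    (hcc : CechComplete X) (hAscoli : IsAscoli (Cp X)) : IsScattered X := by
  by_contra hX
  obtain ⟨K, π, hK, hπ, hsurj⟩ := hcc.exists_isCompact_surjective_cantor hX
  have : PerfectSpace (ℕ → Bool) := perfectSpace_pi
  exact not_isAscoli_Cp_of_surjective.{u, 0} hK hπ hsurj hAscoli
end

section
/- A completely metrizable space X is scattered if and only if C_p(X) is an Ascoli space. -/
open Topology Filter

/-- `X` is completely metrizable: its topology is induced by some complete metric. -/
def CompletelyMetrizable (X : Type*) [t : TopologicalSpace X] : Prop :=
  ∃ m : MetricSpace X, m.toUniformSpace.toTopologicalSpace = t ∧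
    @CompleteSpace X m.toUniformSpace

/-!
Let `X` be metrizable and scattered. A countable subset of `X` then has a countable closure, and a
disjoint sequence of finite sets lies in a countable closed set, hence in a countable `Gδ` set; this
yields point-finite open expansions, which is Sakai's property (κ). Given an open `U ⊆ C_p(X)` and
`z ∈ closure U`, choose functions in `U` close to `z` on larger and larger finite sets, and use the
expansions to truncate their distance to `z` outside sets that are eventually left by each point:
so `z` is the limit of a sequence in `U`. Thus `C_p(X)` is κ-Fréchet–Urysohn, and such a space is
Ascoli because a compact set of continuous functions is uniformly controlled along a convergent
sequence.

Conversely, a complete metric space which is not scattered contains a Cantor set `ℕ → Bool`. Let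
`U n m` consist of the functions which are small at a finite `n`-th approximation of the Cantor set
and large at an `m`-th variant of it. By the Baire category theorem a sequence in such sets with
`n → ∞` has no pointwise convergent subsequence, whereas compact subsets of `C_p(ℕ → Bool)` are
sequentially compact, so each of these meets `U n m` for only finitely many pairs with `m ≤ n + 1`.
Still, functions in `U n 1, …, U n (n + 1)` with disjoint supports cluster at `0`, since more than
`k` disjoint supports cannot all meet a set of `k` points. Bump functions supported in the `U n m`
then converge to `0` uniformly on compact sets but not evenly at `0`.
-/

section Ascoli

variable {Y β : Type*} [TopologicalSpace Y] [UniformSpace β]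

theorem tendstoUniformlyOn_eval_of_isCompact {K : Set C(Y, β)} (hK : IsCompact K) {y : ℕ → Y}
    {z : Y} (hy : Tendsto y atTop (𝓝 z)) :
    TendstoUniformlyOn (fun n (f : C(Y, β)) => f (y n)) (fun f => f z) atTop K := by
  intro V hV
  -- On the compact space `ℕ ∪ {∞}` evaluation is jointly continuous, so the tube lemma applies.
  let σ : C(OnePoint ℕ, Y) := OnePoint.continuousMapMkNat y z hy
  have hK' : IsCompact ((fun f : C(Y, β) => f.comp σ) '' K) := hK.image σ.continuous_precomp
  have hnear : ∀ g ∈ (fun f : C(Y, β) => f.comp σ) '' K,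
      ∀ᶠ p : OnePoint ℕ × C(OnePoint ℕ, β) in 𝓝 (OnePoint.infty, g),
        (p.2 OnePoint.infty, p.2 p.1) ∈ V := fun g _ =>
    have hcont : ContinuousAt (fun p : OnePoint ℕ × C(OnePoint ℕ, β) =>
      (p.2 OnePoint.infty, p.2 p.1)) (OnePoint.infty, g) := by fun_prop
    hcont.eventually (nhds_le_uniformity _ hV)
  have hlim : Tendsto ((↑) : ℕ → OnePoint ℕ) atTop (𝓝 OnePoint.infty) :=
    (OnePoint.continuous_iff_from_nat id).1 continuous_id
  have htube : ∀ᶠ t in 𝓝 OnePoint.infty, ∀ g ∈ (fun f : C(Y, β) => f.comp σ) '' K,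
      (g OnePoint.infty, g t) ∈ V := hK'.eventually_forall_of_forall_eventually hnear
  filter_upwards [hlim.eventually htube] with n hn f hf
  exact hn _ (Set.mem_image_of_mem _ hf)

/-- The κ-Fréchet–Urysohn property: every point in the closure of an *open* set is the limit of a
sequence in that set. -/
def IsKappaFrechetUrysohn (Y : Type*) [TopologicalSpace Y] : Prop :=
  ∀ U : Set Y, IsOpen U → closure U ⊆ seqClosure U

theorem IsKappaFrechetUrysohn.equicontinuous_of_isCompact (hY : IsKappaFrechetUrysohn Y)
    {K : Set C(Y, β)} (hK : IsCompact K) : Equicontinuous fun f : K => (f : C(Y, β)) := by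
  intro z V hV
  obtain ⟨W, ⟨hW, hWclosed⟩, hWV⟩ := uniformity_hasBasis_closed.mem_iff.1 hV
  let U : Set Y := ⋃ f ∈ K, {y | (f z, f y) ∉ W}
  have hU : IsOpen U := isOpen_biUnion fun f _ =>
    hWclosed.isOpen_compl.preimage (by fun_prop : Continuous fun y => (f z, f y))
  have hzU : z ∉ closure U := by
    intro hz
    obtain ⟨y, hyU, hyz⟩ := hY U hU hz
    obtain ⟨n, hn⟩ := (tendstoUniformlyOn_eval_of_isCompact hK hyz W hW).exists
    obtain ⟨f, hf, hfy⟩ := Set.mem_iUnion₂.1 (hyU n)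
    exact hfy (hn f hf)
  filter_upwards [isClosed_closure.isOpen_compl.mem_nhds hzU] with y hy f
  by_contra hfy
  exact hy (subset_closure (Set.mem_iUnion₂.2 ⟨f, f.2, fun h => hfy (hWV h)⟩))

theorem continuous_eval_of_equicontinuous {ι : Type*} [TopologicalSpace ι] {F : ι → Y → β}
    (hF : Equicontinuous F) (hcont : ∀ y, Continuous fun i => F i y) :
    Continuous fun p : Y × ι => F p.2 p.1 := by
  rw [continuous_iff_continuousAt]
  rintro ⟨z, i⟩
  refine Uniform.tendsto_nhds_right.2 fun V hV => ?_
  obtain ⟨W, hW, hWV⟩ := comp_mem_uniformity_sets hV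
  have hi : ∀ᶠ j in 𝓝 i, (F i z, F j z) ∈ W :=
    Uniform.tendsto_nhds_right.1 (hcont z).continuousAt hW
  rw [mem_map, nhds_prod_eq]
  filter_upwards [(hF z W hW).prod_mk hi] with p ⟨hy, hj⟩
  exact hWV ⟨F p.2 z, hj, hy p.2⟩

theorem IsKappaFrechetUrysohn.isAscoli (hY : IsKappaFrechetUrysohn Y) : IsAscoli Y := fun _ hK =>
  continuous_eval_of_equicontinuous (hY.equicontinuous_of_isCompact hK)
    fun y => (continuous_eval_const y).comp continuous_subtype_val

theorem not_isAscoli_of_mapClusterPt [CompletelyRegularSpace Y] {ι : Type*} {U : ι → Set Y}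
    (hU : ∀ i, IsOpen (U i)) {a : ι → Y} (ha : ∀ i, a i ∈ U i) {z : Y}
    (hz : MapClusterPt z cofinite a)
    (hC : ∀ C, IsCompact C → ∀ᶠ i in cofinite, Disjoint (U i) C) : ¬ IsAscoli Y := by
  intro hY
  have hbump : ∀ i, ∃ f : C(Y, ℝ), f (a i) = 1 ∧ Set.EqOn f 0 (U i)ᶜ := fun i => by
    obtain ⟨f, hf, hfa, hf1⟩ :=
      CompletelyRegularSpace.completely_regular_isOpen (a i) (U i) (hU i) (ha i)
    exact ⟨⟨fun y => 1 - (f y : ℝ), by fun_prop⟩, by simp [hfa], fun y hy => by simp [hf1 hy]⟩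
  choose f hfa hf0 using hbump
  have hlim : Tendsto f cofinite (𝓝 0) := by
    rw [ContinuousMap.tendsto_nhds_compactOpen]
    intro C hCc O _ hO
    filter_upwards [hC C hCc] with i hi y hy
    rw [hf0 i (hi.notMem_of_mem_right hy)]
    exact hO hy
  let K : Set C(Y, ℝ) := insert 0 (Set.range f)
  let fK : ι → K := fun i => ⟨f i, Set.mem_insert_of_mem _ ⟨i, rfl⟩⟩
  let zeroK : K := ⟨0, Set.mem_insert _ _⟩
  have hlimK : Tendsto fK cofinite (𝓝 zeroK) := tendsto_subtype_rng.2 hlim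
  have hsmall : ∀ᶠ p : Y × K in 𝓝 (z, zeroK), (p.2 : C(Y, ℝ)) p.1 < 1 :=
    (hY K hlim.isCompact_insert_range_of_cofinite).continuousAt.eventually_lt continuousAt_const
      zero_lt_one
  rw [nhds_prod_eq] at hsmall
  obtain ⟨P, hP, Q, hQ, hPQ⟩ := eventually_prod_iff.1 hsmall
  obtain ⟨i, hPi, hQi⟩ := ((hz.frequently hP).and_eventually (hlimK.eventually hQ)).exists
  exact (hPQ hPi hQi).ne (hfa i)

end Ascoli

section Scattered

variable {X : Type*} [TopologicalSpace X]

theorem isScattered_iff_preperfect :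
    IsScattered X ↔ ∀ A : Set X, Preperfect A → A = ∅ := by
  constructor
  · intro hX A hA
    by_contra hne
    obtain ⟨a, haA, U, hU, hUA⟩ := hX A (Set.nonempty_iff_ne_empty.2 hne)
    have haU : a ∈ U := (hUA.ge rfl).1
    obtain ⟨y, hy, hya⟩ := preperfect_iff_nhds.1 hA a haA U (hU.mem_nhds haU)
    exact hya (hUA.le hy)
  · intro hX A hA
    by_contra! hiso
    refine hA.ne_empty (hX A (preperfect_iff_nhds.2 fun x hx U hU => ?_))
    obtain ⟨V, hVU, hV, hxV⟩ := mem_nhds_iff.1 hU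
    by_contra! hUx
    exact hiso x hx V hV (Set.eq_singleton_iff_unique_mem.2
      ⟨⟨hxV, hx⟩, fun y hy => hUx y ⟨hVU hy.1, hy.2⟩⟩)

theorem IsScattered.of_injective {Y : Type*} [TopologicalSpace Y] (hX : IsScattered X) {f : Y → X}
    (hf : Continuous f) (hinj : Function.Injective f) : IsScattered Y := by
  intro A hA
  obtain ⟨_, ⟨a, ha, rfl⟩, U, hU, hUA⟩ := hX (f '' A) (hA.image f)
  refine ⟨a, ha, f ⁻¹' U, hU.preimage hf, ?_⟩
  rw [← hinj.image_injective.eq_iff, Set.image_preimage_inter, hUA, Set.image_singleton]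

theorem IsScattered.countable [SecondCountableTopology X] (hX : IsScattered X) : Countable X := by
  rw [← Set.countable_univ_iff]
  by_contra hunc
  obtain ⟨A, hA, hne, -⟩ := exists_perfect_nonempty_of_isClosed_of_not_countable isClosed_univ hunc
  exact hne.ne_empty (isScattered_iff_preperfect.1 hX A hA.acc)

theorem IsScattered.countable_closure [TopologicalSpace.PseudoMetrizableSpace X]
    (hX : IsScattered X) {D : Set X} (hD : D.Countable) : (closure D).Countable := by
  have : SecondCountableTopology (closure D) := hD.isSeparable.closure.secondCountableTopology
  exact (hX.of_injective continuous_subtype_val Subtype.val_injective).countable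

end Scattered

section PropertyKappa

open Function

variable {X : Type*} [TopologicalSpace X]

/-- Sakai's property (κ): every disjoint sequence of finite sets has a strongly point-finite
subsequence, that is, one admitting a point-finite expansion to open sets. -/
def HasPropertyKappa (X : Type*) [TopologicalSpace X] : Prop :=
  ∀ E : ℕ → Set X, (∀ n, (E n).Finite) → Pairwise (Disjoint on E) →
    ∃ k : ℕ → ℕ, StrictMono k ∧ ∃ V : ℕ → Set X,
      (∀ n, IsOpen (V n)) ∧ (∀ n, E (k n) ⊆ V n) ∧ ∀ x, ∀ᶠ n in atTop, x ∉ V n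

theorem exists_isOpen_superset_eventually_notMem {E Z : ℕ → Set X}
    (hE : ∀ x, ∀ᶠ n in atTop, x ∉ E n) (hZ : ∀ x, ∃ k, x ∈ Z k)
    (hZE : ∀ k n, IsClosed (Z k \ E n)) :
    ∃ V : ℕ → Set X, (∀ n, IsOpen (V n)) ∧ (∀ n, E n ⊆ V n) ∧ ∀ x, ∀ᶠ n in atTop, x ∉ V n := by
  refine ⟨fun n => ⋂ k ∈ Set.Iic n, (Z k \ E n)ᶜ,
    fun n => (Set.finite_Iic n).isOpen_biInter fun k _ => (hZE k n).isOpen_compl,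
    fun n x hx => Set.mem_iInter₂.2 fun k _ hk => hk.2 hx, fun x => ?_⟩
  obtain ⟨k, hk⟩ := hZ x
  filter_upwards [hE x, eventually_ge_atTop k] with n hn hkn hV
  exact Set.mem_iInter₂.1 hV k hkn ⟨hk, hn⟩

theorem exists_isOpen_superset_of_countable_isGδ [T1Space X] {P : Set X} (hPc : P.Countable)
    (hPG : IsGδ P) {E : ℕ → Set X} (hEP : ∀ n, E n ⊆ P) (hE : ∀ x, ∀ᶠ n in atTop, x ∉ E n) :
    ∃ V : ℕ → Set X, (∀ n, IsOpen (V n)) ∧ (∀ n, E n ⊆ V n) ∧ ∀ x, ∀ᶠ n in atTop, x ∉ V n := by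
  obtain ⟨G, hG, hPG'⟩ := hPG.eq_iInter_nat
  obtain ⟨e, he⟩ := Set.countable_iff_exists_injOn.1 hPc
  have hfib : ∀ k, {x ∈ P | e x = k}.Subsingleton := fun k x hx y hy =>
    he hx.1 hy.1 (hx.2.trans hy.2.symm)
  refine exists_isOpen_superset_eventually_notMem (Z := fun k => (G k)ᶜ ∪ {x ∈ P | e x = k}) hE
    (fun x => ?_) fun k n => ?_
  · by_cases hx : x ∈ P
    · exact ⟨e x, Or.inr ⟨hx, rfl⟩⟩
    · rw [hPG', Set.mem_iInter, not_forall] at hx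
      exact hx.imp fun k hk => Or.inl hk
  · have hdisj : Disjoint (G k)ᶜ (E n) := Set.disjoint_compl_left_iff_subset.2
      ((hEP n).trans (hPG'.trans_subset (Set.iInter_subset G k)))
    rw [Set.union_sdiff_distrib, hdisj.sdiff_eq_left]
    exact (hG k).isClosed_compl.union ((hfib k).finite.subset Set.sdiff_subset).isClosed

theorem eventually_notMem_of_pairwise_disjoint {α : Type*} {E : ℕ → Set α}
    (hE : Pairwise (Disjoint on E)) (x : α) : ∀ᶠ n in atTop, x ∉ E n := by
  have hsub : {n | x ∈ E n}.Subsingleton := fun m hm n hn => by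
    by_contra hmn
    exact (hE hmn).notMem_of_mem_left hm hn
  rw [← Nat.cofinite_eq_atTop]
  exact hsub.finite.eventually_cofinite_notMem

theorem HasPropertyKappa.of_forall_countable [T1Space X]
    (h : ∀ D : Set X, D.Countable → ∃ P, D ⊆ P ∧ P.Countable ∧ IsGδ P) : HasPropertyKappa X := by
  intro E hfin hdisj
  obtain ⟨P, hEP, hPc, hPG⟩ := h (⋃ n, E n) (Set.countable_iUnion fun n => (hfin n).countable)
  exact ⟨id, strictMono_id, exists_isOpen_superset_of_countable_isGδ hPc hPG
    (fun n => (Set.subset_iUnion E n).trans hEP) (eventually_notMem_of_pairwise_disjoint hdisj)⟩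

theorem IsScattered.hasPropertyKappa [TopologicalSpace.MetrizableSpace X] (hX : IsScattered X) :
    HasPropertyKappa X := by
  let := TopologicalSpace.metrizableSpaceMetric X
  exact .of_forall_countable fun D hD =>
    ⟨closure D, subset_closure, hX.countable_closure hD, isClosed_closure.isGδ⟩

end PropertyKappa

section FunctionSpace

open Function

variable {X : Type*} [TopologicalSpace X]

theorem Cp.continuous_eval_s13 (x : X) : Continuous fun f : Cp X => f.1 x :=
  (continuous_apply x).comp continuous_subtype_val

theorem Cp.exists_finset_forall_eqOn_mem {f : Cp X} {U : Set (Cp X)} (hU : U ∈ 𝓝 f) :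
    ∃ I : Finset X, ∀ g : Cp X, Set.EqOn g.1 f.1 I → g ∈ U := by
  rw [nhds_subtype_eq_comap, mem_comap] at hU
  obtain ⟨t, ht, htU⟩ := hU
  rw [nhds_pi, mem_pi'] at ht
  obtain ⟨I, s, hs, hst⟩ := ht
  refine ⟨I, fun g hg => htU (hst fun x hx => ?_)⟩
  rw [hg hx]
  exact mem_of_mem_nhds (hs x)

theorem Cp.exists_close_and_eqOn_mem {U : Set (Cp X)} (hU : IsOpen U) {z : Cp X}
    (hz : z ∈ closure U) (F : Finset X) {ε : ℝ} (hε : 0 < ε) :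
    ∃ (f : Cp X) (H : Finset X), F ⊆ H ∧ (∀ x ∈ F, |f.1 x - z.1 x| ≤ ε) ∧
      ∀ g : Cp X, Set.EqOn g.1 f.1 H → g ∈ U := by
  classical
  have hclose : ∀ᶠ f : Cp X in 𝓝 z, ∀ x ∈ F, |f.1 x - z.1 x| ≤ ε := by
    refine (eventually_all_finset F).2 fun x _ => ?_
    filter_upwards [(Cp.continuous_eval_s13 x).continuousAt.eventually
      (Metric.closedBall_mem_nhds _ hε)] with f hf
    exact hf
  obtain ⟨f, hfz, hfU⟩ := mem_closure_iff_nhds.1 hz _ hclose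
  obtain ⟨I, hI⟩ := Cp.exists_finset_forall_eqOn_mem (hU.mem_nhds hfU)
  exact ⟨f, F ∪ I, Finset.subset_union_left, hfz,
    fun g hg => hI g (hg.mono (by simp))⟩

theorem Cp.exists_seq_close_and_eqOn_mem {U : Set (Cp X)} (hU : IsOpen U) {z : Cp X}
    (hz : z ∈ closure U) {ε : ℕ → ℝ} (hε : ∀ n, 0 < ε n) :
    ∃ (f : ℕ → Cp X) (F : ℕ → Finset X), Monotone F ∧
      (∀ n, ∀ x ∈ F n, |(f n).1 x - z.1 x| ≤ ε n) ∧
      ∀ n, ∀ g : Cp X, Set.EqOn g.1 (f n).1 (F (n + 1)) → g ∈ U := by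
  choose f H hFH hfz hfU using fun n F => Cp.exists_close_and_eqOn_mem hU hz F (hε n)
  let F : ℕ → Finset X := fun n => Nat.rec ∅ H n
  exact ⟨fun n => f n (F n), F, monotone_nat_of_le_succ fun n => hFH n (F n),
    fun n => hfz n (F n), fun n => hfU n (F n)⟩

theorem exists_continuous_one_le_of_finite_subset_isOpen [CompletelyRegularSpace X] {E V : Set X}
    (hE : E.Finite) (hV : IsOpen V) (hEV : E ⊆ V) :
    ∃ b : C(X, ℝ), (∀ x, 0 ≤ b x) ∧ (∀ x ∈ E, 1 ≤ b x) ∧ Set.EqOn b 0 Vᶜ := by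
  have hbump : ∀ e ∈ E, ∃ f : X → unitInterval, Continuous f ∧ f e = 0 ∧ Set.EqOn f 1 Vᶜ :=
    fun e he => CompletelyRegularSpace.completely_regular_isOpen e V hV (hEV he)
  choose! f hf hfe hf1 using hbump
  lift E to Finset X using hE
  have hnonneg : ∀ x, ∀ e ∈ E, (0 : ℝ) ≤ 1 - f e x := fun x e _ => unitInterval.one_minus_nonneg _
  refine ⟨⟨fun x => ∑ e ∈ E, (1 - (f e x : ℝ)), continuous_finsetSum E fun e he => ?_⟩,
    fun x => Finset.sum_nonneg (hnonneg x), fun e he => ?_, fun x hx => ?_⟩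
  · have := hf e he
    fun_prop
  · calc (1 : ℝ) = 1 - f e e := by simp [hfe e he]
      _ ≤ ∑ e' ∈ E, (1 - (f e' e : ℝ)) := Finset.single_le_sum (hnonneg e) he
  · exact Finset.sum_eq_zero fun e he => by simp [hf1 e he hx]

theorem Cp.exists_eqOn_and_close_off [CompletelyRegularSpace X] (f z : Cp X) {E V : Set X}
    (hE : E.Finite) (hV : IsOpen V) (hEV : E ⊆ V) {ε : ℝ} (hε : 0 ≤ ε) :
    ∃ g : Cp X, Set.EqOn g.1 f.1 (E ∪ {x | |f.1 x - z.1 x| ≤ ε}) ∧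
      ∀ x ∉ V, |g.1 x - z.1 x| ≤ ε := by
  obtain ⟨b, hb0, hbE, hbV⟩ := exists_continuous_one_le_of_finite_subset_isOpen hE hV hEV
  -- `g - z` is `f - z` truncated at height `r`, which is large on `E` and equal to `ε` off `V`.
  let r : X → ℝ := fun x => ε + b x * |f.1 x - z.1 x|
  have hfc := f.2
  have hzc := z.2
  refine ⟨⟨fun x => z.1 x + max (-r x) (min (r x) (f.1 x - z.1 x)), by fun_prop⟩,
    fun x hx => ?_, fun x hx => ?_⟩
  · have hfr : |f.1 x - z.1 x| ≤ r x := by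
      rcases hx with hx | hx
      · exact le_add_of_nonneg_of_le hε (le_mul_of_one_le_left (abs_nonneg _) (hbE x hx))
      · exact le_add_of_le_of_nonneg hx (mul_nonneg (hb0 x) (abs_nonneg _))
    obtain ⟨hlo, hhi⟩ := abs_le.1 hfr
    simp only [min_eq_right hhi, max_eq_right hlo, add_sub_cancel]
  · have hrx : r x = ε := by simp [r, hbV hx]
    simp only [hrx, add_sub_cancel_left, abs_le]
    exact ⟨le_max_left _ _, max_le (neg_le_self hε) (min_le_left _ _)⟩

theorem Cp.isKappaFrechetUrysohn [CompletelyRegularSpace X] (hX : HasPropertyKappa X) :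
    IsKappaFrechetUrysohn (Cp X) := by
  intro U hU z hz
  let ε : ℕ → ℝ := fun n => 1 / ((n : ℝ) + 1)
  have hε : ∀ n, 0 < ε n := fun n => Nat.one_div_pos_of_nat
  obtain ⟨f, F, hF, hfz, hfU⟩ := Cp.exists_seq_close_and_eqOn_mem hU hz hε
  let G : ℕ → Set X := fun n => F n
  have hG : Monotone G := fun m n hmn => Finset.coe_subset.2 (hF hmn)
  have hEfin : ∀ n, (disjointed G (n + 1)).Finite := fun n =>
    (F (n + 1)).finite_toSet.subset (disjointed_le G _)
  obtain ⟨k, hk, V, hV, hEV, hVx⟩ := hX (fun n => disjointed G (n + 1)) hEfin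
    ((disjoint_disjointed G).comp_of_injective (add_left_injective 1))
  choose g hgf hgz using fun n =>
    Cp.exists_eqOn_and_close_off (f (k n)) z (hEfin (k n)) (hV n) (hEV n) (hε (k n)).le
  refine ⟨g, fun n => hfU (k n) (g n) ((hgf n).mono ?_), ?_⟩
  · calc G (k n + 1) = disjointed G (k n + 1) ∪ G (k n) := (hG.disjointed_add_one_sup (k n)).symm
      _ ⊆ _ := Set.union_subset_union_right _ (hfz (k n))
  · refine tendsto_subtype_rng.2 (tendsto_pi_nhds.2 fun x => ?_)
    refine tendsto_iff_dist_tendsto_zero.2 (squeeze_zero' (.of_forall fun _ => dist_nonneg)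
      ((hVx x).mono fun n hn => hgz n x hn)
      (tendsto_one_div_add_atTop_nhds_zero_nat.comp hk.tendsto_atTop))

theorem IsScattered.isAscoli_Cp [TopologicalSpace.MetrizableSpace X] (hX : IsScattered X) :
    IsAscoli (Cp X) := by
  let := TopologicalSpace.metrizableSpaceMetric X
  exact (Cp.isKappaFrechetUrysohn hX.hasPropertyKappa).isAscoli

end FunctionSpace

section CantorSet

open Function

theorem Cp.isSeqCompact_of_isCompact {K : Type*} [TopologicalSpace K]
    [TopologicalSpace.SeparableSpace K] {C : Set (Cp K)} (hC : IsCompact C) : IsSeqCompact C := by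
  obtain ⟨D, hDc, hD⟩ := TopologicalSpace.exists_countable_dense K
  let := hDc.toEncodable
  have : CompactSpace C := isCompact_iff_compactSpace.1 hC
  have hsep : Pairwise fun f g : C => ∃ d : D, f.1.1 d ≠ g.1.1 d := fun f g hfg => by
    by_contra! heq
    exact hfg (Subtype.ext (Subtype.ext
      (f.1.2.ext_on hD g.1.2 fun d hd => heq ⟨d, hd⟩)))
  have : TopologicalSpace.MetrizableSpace C :=
    Metric.PiNatEmbed.TopologicalSpace.MetrizableSpace.of_countable_separating
      (fun (d : D) (f : C) => f.1.1 d)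
      (fun d => (Cp.continuous_eval_s13 d.1).comp continuous_subtype_val) hsep
  let := TopologicalSpace.metrizableSpaceMetric C
  intro u hu
  obtain ⟨f, -, k, hk, hlim⟩ :=
    isCompact_univ.isSeqCompact (x := fun n => (⟨u n, hu n⟩ : C)) fun _ => Set.mem_univ _
  exact ⟨f, f.2, k, hk, (continuous_subtype_val.tendsto f).comp hlim⟩

theorem eventually_residual_frequently_mem {K : Type*} [TopologicalSpace K] {O : ℕ → Set K}
    (hO : ∀ n, IsOpen (O n)) (hdense : ∀ m, Dense (⋃ n ≥ m, O n)) :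
    ∀ᶠ x in residual K, ∃ᶠ n in atTop, x ∈ O n := by
  have hres : ∀ᶠ x in residual K, ∀ m, x ∈ ⋃ n ≥ m, O n := eventually_countable_forall.2 fun m =>
    residual_of_dense_open (isOpen_biUnion fun n _ => hO n) (hdense m)
  filter_upwards [hres] with x hx
  exact frequently_atTop.2 fun m => by simpa using hx m

theorem exists_forall_not_tendsto_of_dense {K : Type*} [TopologicalSpace K] [BaireSpace K]
    [Nonempty K] {g : ℕ → K → ℝ} (hg : ∀ n, Continuous (g n)) {a b : ℝ} (hab : a < b)
    (ha : ∀ m, Dense (⋃ n ≥ m, {x | g n x < a})) (hb : ∀ m, Dense (⋃ n ≥ m, {x | b < g n x})) :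
    ∃ x, ∀ l, ¬ Tendsto (fun n => g n x) atTop (𝓝 l) := by
  have hfreq := (eventually_residual_frequently_mem
    (fun n => isOpen_lt (hg n) continuous_const) ha).and
    (eventually_residual_frequently_mem (fun n => isOpen_lt continuous_const (hg n)) hb)
  obtain ⟨x, hxa, hxb⟩ := (dense_of_mem_residual hfreq).nonempty
  refine ⟨x, fun l hl => hab.not_ge ?_⟩
  calc b ≤ l := ge_of_tendsto_of_frequently hl (hxb.mono fun n (hn : b < g n x) => hn.le)
    _ ≤ a := le_of_tendsto_of_frequently hl (hxa.mono fun n (hn : g n x < a) => hn.le)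

/-- The point of the Cantor space `ℕ → Bool` which extends the word `s` of length `n` by zeros,
except for a one at position `n + m`. -/
def taggedWord (n m : ℕ) (s : Fin n → Bool) : ℕ → Bool :=
  fun i => if h : i < n then s ⟨i, h⟩ else decide (i = n + m)

/-- A continuous function on the Cantor space reading off the tag `m ≤ n + 1` of
`taggedWord n m s`. -/
def tagValue (n : ℕ) (w : ℕ → Bool) : ℝ :=
  ∑ m ∈ Finset.range (n + 2), if w (n + m) then (m : ℝ) else 0

theorem continuous_tagValue (n : ℕ) : Continuous (tagValue n) :=
  continuous_finsetSum _ fun m _ =>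
    (continuous_of_discreteTopology (f := fun b : Bool => if b then (m : ℝ) else 0)).comp
      (continuous_apply (n + m))

theorem tagValue_taggedWord {n m : ℕ} (hm : m ≤ n + 1) (s : Fin n → Bool) :
    tagValue n (taggedWord n m s) = m := by
  simp [tagValue, taggedWord, Nat.lt_succ_of_le hm]

theorem tendsto_taggedWord {n : ℕ → ℕ} (hn : Tendsto n atTop atTop) (m : ℕ → ℕ) (w : ℕ → Bool) :
    Tendsto (fun k => taggedWord (n k) (m k) fun i => w i) atTop (𝓝 w) := by
  refine tendsto_pi_nhds.2 fun i => tendsto_const_nhds.congr' ?_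
  filter_upwards [hn.eventually_gt_atTop i] with k hk
  simp [taggedWord, hk]

theorem dense_iUnion_of_taggedWord_mem {n : ℕ → ℕ} (hn : Tendsto n atTop atTop) (m : ℕ → ℕ)
    {O : ℕ → Set (ℕ → Bool)} (hO : ∀ k s, taggedWord (n k) (m k) s ∈ O k) (N : ℕ) :
    Dense (⋃ k ≥ N, O k) := fun w =>
  mem_closure_of_tendsto (tendsto_taggedWord hn m w) <| (eventually_ge_atTop N).mono fun k hk =>
    Set.mem_biUnion hk (hO k _)

/-- The open set of functions on the Cantor space that are small at all words of length `n` with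
tag `0` and large at all words of length `n` with tag `m`. -/
def tagOscillating (n m : ℕ) : Set (Cp (ℕ → Bool)) :=
  {f | ∀ s, f.1 (taggedWord n 0 s) < 1 / 3 ∧ 2 / 3 < f.1 (taggedWord n m s)}

theorem isOpen_tagOscillating (n m : ℕ) : IsOpen (tagOscillating n m) := by
  simp only [tagOscillating, Set.ofPred_forall]
  exact isOpen_iInter_of_finite fun s => (isOpen_lt (Cp.continuous_eval_s13 _) continuous_const).inter
    (isOpen_lt continuous_const (Cp.continuous_eval_s13 _))

theorem not_isCompact_of_mem_tagOscillating {C : Set (Cp (ℕ → Bool))} {g : ℕ → Cp (ℕ → Bool)}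
    (hgC : ∀ k, g k ∈ C) {n m : ℕ → ℕ} (hn : Tendsto n atTop atTop)
    (hg : ∀ k, g k ∈ tagOscillating (n k) (m k)) : ¬ IsCompact C := by
  intro hC
  obtain ⟨f, -, k, hk, hlim⟩ := Cp.isSeqCompact_of_isCompact hC hgC
  have hnk : Tendsto (n ∘ k) atTop atTop := hn.comp hk.tendsto_atTop
  obtain ⟨x, hx⟩ := exists_forall_not_tendsto_of_dense (fun i => (g (k i)).2)
    (by norm_num : (1 / 3 : ℝ) < 2 / 3)
    (dense_iUnion_of_taggedWord_mem hnk (fun _ => 0) fun i s => (hg (k i) s).1)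
    (dense_iUnion_of_taggedWord_mem hnk (m ∘ k) fun i s => (hg (k i) s).2)
  exact hx (f.1 x) (((Cp.continuous_eval_s13 x).tendsto f).comp hlim)

theorem tendsto_sigma_fst_cofinite {β : ℕ → Type*} [∀ n, Finite (β n)] :
    Tendsto (Sigma.fst : (Σ n, β n) → ℕ) cofinite atTop := by
  rw [← Nat.cofinite_eq_atTop]
  refine Tendsto.cofinite_of_finite_preimage_singleton fun n => ?_
  rw [← Set.range_sigmaMk n]
  exact Set.finite_range _

theorem eventually_disjoint_tagOscillating {C : Set (Cp (ℕ → Bool))} (hC : IsCompact C) :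
    ∀ᶠ i : Σ n, Fin (n + 1) in cofinite, Disjoint (tagOscillating i.1 (i.2 + 1)) C := by
  by_contra hfreq
  have hex : ∀ N, ∃ i : Σ n, Fin (n + 1),
      ¬ Disjoint (tagOscillating i.1 (i.2 + 1)) C ∧ N ≤ i.1 := fun N =>
    ((not_eventually.1 hfreq).and_eventually
      (tendsto_sigma_fst_cofinite.eventually_ge_atTop N)).exists
  choose i hi hiN using hex
  choose g hg hgC using fun N => Set.not_disjoint_iff.1 (hi N)
  exact not_isCompact_of_mem_tagOscillating hgC (tendsto_atTop_mono hiN tendsto_id) hg hC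

theorem Cp.mapClusterPt_zero_of_disjoint_support {X : Type*} [TopologicalSpace X]
    {a : ∀ n, Fin (n + 1) → Cp X} (ha : ∀ n, Pairwise (Disjoint on fun j => support (a n j).1)) :
    MapClusterPt ⟨0, continuous_zero⟩ cofinite fun i : Σ n, Fin (n + 1) => a i.1 i.2 := by
  refine mapClusterPt_iff_frequently.2 fun W hW => ?_
  obtain ⟨I, hI⟩ := Cp.exists_finset_forall_eqOn_mem hW
  have hvanish : ∀ n ≥ I.card, ∃ j, ∀ x ∈ I, (a n j).1 x = 0 := by
    intro n hn
    by_contra! hne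
    choose p hpI hp using hne
    have hinj : Injective fun j => (⟨p j, hpI j⟩ : I) := fun i j hij => by
      by_contra hne
      have hpij : p i = p j := congrArg Subtype.val hij
      exact (ha n hne).notMem_of_mem_left (hp i) (hpij ▸ hp j)
    have hcard := Fintype.card_le_of_injective _ hinj
    simp only [Fintype.card_fin, Fintype.card_coe] at hcard
    omega
  choose! j hj using hvanish
  have hinf : ((fun n => (⟨n, j n⟩ : Σ n, Fin (n + 1))) '' Set.Ici I.card).Infinite :=
    (Set.Ici_infinite _).image fun m _ n _ hmn => congrArg Sigma.fst hmn
  refine frequently_cofinite_iff_infinite.2 (hinf.mono ?_)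
  rintro _ ⟨n, hn, rfl⟩
  exact hI _ (hj n hn)

/-- The tent function of height `1` supported on `(-1/2, 1/2)`, so that its translates by distinct
integers have disjoint supports. -/
def tent (t : ℝ) : ℝ := max 0 (1 - 2 * |t|)

theorem continuous_tent : Continuous tent := by
  unfold tent
  fun_prop

theorem tent_zero : tent 0 = 1 := by simp [tent]

theorem tent_eq_zero_iff {t : ℝ} : tent t = 0 ↔ 1 / 2 ≤ |t| := by
  rw [tent, max_eq_left_iff, sub_nonpos]
  constructor <;> intro h <;> linarith

theorem disjoint_support_tent_sub_natCast {α : Type*} (h : α → ℝ) {m n : ℕ} (hmn : m ≠ n) :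
    Disjoint (support fun x => tent (h x - m)) (support fun x => tent (h x - n)) := by
  refine Set.disjoint_left.2 fun x hm hn => ?_
  rw [mem_support, ne_eq, tent_eq_zero_iff, not_le, ← Real.dist_eq] at hm hn
  have hdist : (1 : ℝ) ≤ dist (m : ℝ) n := Nat.dist_cast_real m n ▸ Nat.pairwise_one_le_dist hmn
  linarith [dist_triangle_left (m : ℝ) n (h x)]

theorem mem_tagOscillating_of_eq_tent_tagValue_sub {n : ℕ} (j : Fin (n + 1))
    {f : Cp (ℕ → Bool)} (hf : ∀ w, f.1 w = tent (tagValue n w - (j + 1 : ℕ))) :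
    f ∈ tagOscillating n (j + 1) := by
  intro s
  have hzero : tent (0 - (j + 1 : ℕ)) = 0 := by
    rw [tent_eq_zero_iff, zero_sub, abs_neg, Nat.abs_cast, Nat.cast_succ]
    linarith [(j : ℕ).cast_nonneg (α := ℝ)]
  rw [hf, hf, tagValue_taggedWord (Nat.zero_le _), tagValue_taggedWord (Nat.succ_le_of_lt j.2),
    Nat.cast_zero, hzero, sub_self, tent_zero]
  norm_num

theorem exists_continuousMap_comp_eq {K X : Type*} [TopologicalSpace K] [CompactSpace K]
    [TopologicalSpace X] [T35Space X] {φ : K → X} (hφ : Continuous φ) (hinj : Injective φ)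
    (h : C(K, ℝ)) : ∃ H : C(X, ℝ), ∀ w, H (φ w) = h w := by
  -- `X` need not be normal, so Tietze is applied in its Stone–Čech compactification.
  have hemb : IsClosedEmbedding (stoneCechUnit ∘ φ) :=
    (continuous_stoneCechUnit.comp hφ).isClosedEmbedding
      (injective_stoneCechUnit_of_t35Space.comp hinj)
  obtain ⟨H, hH⟩ := h.exists_extension hemb
  exact ⟨H.comp ⟨stoneCechUnit, continuous_stoneCechUnit⟩, fun w => DFunLike.congr_fun hH w⟩

theorem Cp.continuous_comp {K X : Type*} [TopologicalSpace K] [TopologicalSpace X] {φ : K → X}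
    (hφ : Continuous φ) : Continuous fun f : Cp X => (⟨f.1 ∘ φ, f.2.comp hφ⟩ : Cp K) :=
  Continuous.subtype_mk (continuous_pi fun w => Cp.continuous_eval_s13 (φ w)) _

theorem not_isAscoli_Cp_of_cantor_injective {X : Type*} [TopologicalSpace X] [T35Space X]
    {φ : (ℕ → Bool) → X} (hφ : Continuous φ) (hinj : Injective φ) : ¬ IsAscoli (Cp X) := by
  choose h hh using fun n => exists_continuousMap_comp_eq hφ hinj ⟨_, continuous_tagValue n⟩
  let a : ∀ n, Fin (n + 1) → Cp X := fun n j => ⟨fun x => tent (h n x - (j + 1 : ℕ)),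
    continuous_tent.comp ((h n).continuous.sub continuous_const)⟩
  have hdisj : ∀ n, Pairwise (Disjoint on fun j => support (a n j).1) := fun n i j hij =>
    disjoint_support_tent_sub_natCast _ fun h => hij (Fin.ext (Nat.succ_injective h))
  have hR := Cp.continuous_comp hφ
  refine not_isAscoli_of_mapClusterPt
    (fun i => (isOpen_tagOscillating i.1 (i.2 + 1)).preimage hR) (fun i => ?_)
    (Cp.mapClusterPt_zero_of_disjoint_support hdisj) fun C hC => ?_
  · exact mem_tagOscillating_of_eq_tent_tagValue_sub i.2 fun w =>
      congrArg (fun t => tent (t - _)) (hh i.1 w)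
  · filter_upwards [eventually_disjoint_tagOscillating (hC.image hR)] with i hi
    exact (hi.preimage _).mono_right (Set.subset_preimage_image _ _)

theorem IsAscoli.isScattered_of_completeSpace {X : Type*} [MetricSpace X] [CompleteSpace X]
    (hX : IsAscoli (Cp X)) : IsScattered X := by
  refine isScattered_iff_preperfect.2 fun A hA => ?_
  by_contra! hne
  obtain ⟨φ, -, hφ, hinj⟩ := hA.perfect_closure.exists_nat_bool_injection hne.closure
  exact not_isAscoli_Cp_of_cantor_injective hφ hinj hX

end CantorSet

theorem stmt13 {X : Type*} [TopologicalSpace X]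
    (hm : CompletelyMetrizable X) : IsScattered X ↔ IsAscoli (Cp X) := by
  obtain ⟨m, rfl, hc⟩ := hm
  exact ⟨IsScattered.isAscoli_Cp, IsAscoli.isScattered_of_completeSpace⟩
end
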